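/- Let R be a local complete intersection ring and M, N finitely generated R-modules with M maximal Cohen-Macaulay. If Tor_i^R(M,N) = 0 for all sufficiently large i, then Tor_i^R(M,N) = 0 for all i ≥ 1. -/

import Mathlib

/-!
Let `R̂ = Q/(r₁, …, rₖ)` with `Q` regular local. Faithfully flat base change to `R̂` preserves and
reflects vanishing of Tor, and does not lower `depth M` or raise the dimension. Over `Q` the
Auslander–Buchsbaum bound kills `Tor_i^Q(M, N)` for `i > dim Q - depth M`, and for a maximal
Cohen–Macaulay `M` this difference is at most `k`.

To return from `Q` to `R̂`, cut down by one `f = rⱼ` at a time. For a `Q/f`-module `M` with syzygy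
`K` over `Q`, reducing `0 → K → F → M → 0` modulo `f` gives `0 → M → K/fK → F/fF → M → 0`, hence
the long exact sequence
`Tor_{i+2}^{Q/f}(M, N) → Tor_i^{Q/f}(M, N) → Tor_{i+1}^Q(M, N) → Tor_{i+1}^{Q/f}(M, N)`.
Once the Tor over `Q` vanishes, vanishing over `Q/f` propagates downwards in steps of two, and each
passage from `Q` to `Q/f` lowers by one the degree from which Tor is known to vanish.
-/

open RingTheory.Sequence CategoryTheory

universe u

noncomputable section

/-- Depth of a module: supremum of lengths of weakly regular sequences consisting of nonunits.
For a f.g. module over a noetherian local ring this is the usual depth, and the zero module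
has depth `⊤`. -/
def rdepth (A : Type u) [CommRing A] (M : Type u) [AddCommGroup M] [Module A M] : ℕ∞ :=
  sSup {n : ℕ∞ | ∃ rs : List A, (rs.length : ℕ∞) = n ∧ (∀ r ∈ rs, r ∈ nonunits A) ∧
    RingTheory.Sequence.IsWeaklyRegular M rs}

/-- Serre's condition `(S_n)`. -/
def SerreCond (R : Type u) [CommRing R] (M : Type u) [AddCommGroup M] [Module R M] (n : ℕ) :
    Prop :=
  ∀ (p : Ideal R) (hp : p.IsPrime), Nontrivial (LocalizedModule p.primeCompl M) →
    min (n : ℕ∞) (Order.height (⟨p, hp⟩ : PrimeSpectrum R)) ≤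
      rdepth (Localization.AtPrime p) (LocalizedModule p.primeCompl M)

/-- `Tor_i^R(M, N)` as an object of `ModuleCat R`. -/
def TorModCat (R : Type u) [CommRing R] (i : ℕ) (M N : Type u) [AddCommGroup M] [Module R M]
    [AddCommGroup N] [Module R N] : ModuleCat.{u} R :=
  ((Tor (ModuleCat.{u} R) i).obj (ModuleCat.of R M)).obj (ModuleCat.of R N)

/-- `Tor_i^R(M, N)` as a type (with its `R`-module structure given by instances below). -/
def TorM (R : Type u) [CommRing R] (i : ℕ) (M N : Type u) [AddCommGroup M] [Module R M]
    [AddCommGroup N] [Module R N] : Type u :=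
  TorModCat R i M N

instance (R : Type u) [CommRing R] (i : ℕ) (M N : Type u) [AddCommGroup M] [Module R M]
    [AddCommGroup N] [Module R N] : AddCommGroup (TorM R i M N) :=
  inferInstanceAs (AddCommGroup (TorModCat R i M N))

instance (R : Type u) [CommRing R] (i : ℕ) (M N : Type u) [AddCommGroup M] [Module R M]
    [AddCommGroup N] [Module R N] : Module R (TorM R i M N) :=
  inferInstanceAs (Module R (TorModCat R i M N))

/-- A regular local ring: noetherian local, whose maximal ideal is generated by a
(weakly) regular sequence. -/
def IsRegLocal (Q : Type u) [CommRing Q] : Prop :=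
  IsNoetherianRing Q ∧ IsLocalRing Q ∧
    ∃ rs : List Q, RingTheory.Sequence.IsWeaklyRegular Q rs ∧ (∀ r ∈ rs, r ∈ nonunits Q) ∧
      Ideal.span {x | x ∈ rs} = Ideal.span (nonunits Q)

/-- A (local) complete intersection: noetherian local ring whose completion is a regular
local ring modulo a regular sequence (of nonunits). -/
def IsCIRing (R : Type u) [CommRing R] : Prop :=
  IsNoetherianRing R ∧ IsLocalRing R ∧
    ∃ (Q : Type u) (_ : CommRing Q), IsRegLocal Q ∧
      ∃ rs : List Q, (∀ r ∈ rs, r ∈ nonunits Q) ∧ RingTheory.Sequence.IsWeaklyRegular Q rs ∧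
        Nonempty ((Q ⧸ Ideal.span {x | x ∈ rs}) ≃+* AdicCompletion (Ideal.span (nonunits R)) R)

/-- A hypersurface: noetherian local ring whose completion is a regular local ring modulo
a single non-zerodivisor in the maximal ideal. -/
def IsHypersurfaceRing (R : Type u) [CommRing R] : Prop :=
  IsNoetherianRing R ∧ IsLocalRing R ∧
    ∃ (Q : Type u) (_ : CommRing Q), IsRegLocal Q ∧
      ∃ f : Q, f ∈ nonunits Q ∧ f ∈ nonZeroDivisors Q ∧
        Nonempty ((Q ⧸ Ideal.span {f}) ≃+* AdicCompletion (Ideal.span (nonunits R)) R)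

/-- Maximal Cohen-Macaulay module over a local ring: depth equals the Krull dimension. -/
def IsMCM (R : Type u) [CommRing R] (M : Type u) [AddCommGroup M] [Module R M] : Prop :=
  (rdepth R M : WithBot ℕ∞) = ringKrullDim R

/-- Cohen-Macaulay local ring. -/
def IsCMLocalRing (A : Type u) [CommRing A] : Prop :=
  IsNoetherianRing A ∧ IsLocalRing A ∧ (rdepth A A : WithBot ℕ∞) = ringKrullDim A

/-- `M` has (constant) rank: free of the same rank at every minimal prime. -/
def HasRank (R : Type u) [CommRing R] (M : Type u) [AddCommGroup M] [Module R M] : Prop :=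
  ∃ r : ℕ, ∀ (p : Ideal R) (hp : p.IsPrime), p ∈ minimalPrimes R →
    Nonempty ((LocalizedModule (@Ideal.primeCompl R _ p hp) M)
      ≃ₗ[Localization (@Ideal.primeCompl R _ p hp)]
      (Fin r → Localization (@Ideal.primeCompl R _ p hp)))

/-- Projective dimension at most `n`. -/
def pdLE (R : Type u) [CommRing R] : ℕ → ∀ (M : Type u) [AddCommGroup M] [Module R M], Prop
  | 0, M, _, _ => Module.Projective R M
  | n+1, M, _, _ => ∃ (P : Type u) (_ : AddCommGroup P) (_ : Module R P),
      Module.Projective R P ∧ ∃ f : P →ₗ[R] M, Function.Surjective f ∧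
        pdLE R n (LinearMap.ker f)

/-- Injective dimension at most `n`. -/
def idLE (R : Type u) [CommRing R] : ℕ → ∀ (M : Type u) [AddCommGroup M] [Module R M], Prop
  | 0, M, _, _ => Module.Injective R M
  | n+1, M, _, _ => ∃ (I : Type u) (_ : AddCommGroup I) (_ : Module R I),
      Module.Injective R I ∧ ∃ f : M →ₗ[R] I, Function.Injective f ∧
        idLE R n (I ⧸ LinearMap.range f)

/-- Gorenstein local ring: noetherian local with finite self-injective dimension. -/
def IsGorensteinLocalRing (R : Type u) [CommRing R] : Prop :=
  IsNoetherianRing R ∧ IsLocalRing R ∧ ∃ n : ℕ, idLE R n R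

/-- The map `M → R^ν` obtained from a free cover `ε : R^ν ↠ M^*` by dualizing and composing
with the biduality map; its cokernel is the pushforward `M₁`. -/
def pushMap (R M : Type u) [CommRing R] [AddCommGroup M] [Module R M] {ν : ℕ}
    (ε : (Fin ν → R) →ₗ[R] Module.Dual R M) : M →ₗ[R] (Fin ν → R) where
  toFun m := fun i => ε (Pi.single i 1) m
  map_add' x y := by funext i; simp
  map_smul' r x := by funext i; simp

/-- Length of a module, as the Krull dimension of its lattice of submodules. -/
def mlen (R : Type u) [CommRing R] (M : Type u) [AddCommGroup M] [Module R M] :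
    WithBot ℕ∞ :=
  Order.krullDim (Submodule R M)

/-- An unramified regular local ring: equicharacteristic (contains a field), or of mixed
characteristic `(0, p)` with `p` not in the square of the maximal ideal. -/
def IsUnramifiedRegLocal (Q : Type u) [CommRing Q] : Prop :=
  IsRegLocal Q ∧
    ((∃ (K : Type u) (_ : Field K), Nonempty (K →+* Q)) ∨
     (CharZero Q ∧ ∃ p : ℕ, p.Prime ∧ (p : Q) ∈ nonunits Q ∧
        (p : Q) ∉ (Ideal.span (nonunits Q)) ^ 2))

section ShortExact

/-- `0 → A → B → C → 0` is a short exact sequence of modules. -/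
structure IsShortExact {R A B C : Type*} [CommRing R] [AddCommGroup A] [Module R A]
    [AddCommGroup B] [Module R B] [AddCommGroup C] [Module R C]
    (f : A →ₗ[R] B) (g : B →ₗ[R] C) : Prop where
  injective : Function.Injective f
  exact : Function.Exact f g
  surjective : Function.Surjective g

variable {R A B C : Type*} [CommRing R] [AddCommGroup A] [Module R A]
  [AddCommGroup B] [Module R B] [AddCommGroup C] [Module R C]

theorem isShortExact_subtype_ker {g : B →ₗ[R] C} (hg : Function.Surjective g) :
    IsShortExact (LinearMap.ker g).subtype g :=
  ⟨Subtype.val_injective, LinearMap.exact_subtype_ker_map g, hg⟩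

theorem isShortExact_subtype_range {f : A →ₗ[R] B} {g : B →ₗ[R] C} (hfg : Function.Exact f g)
    (hg : Function.Surjective g) : IsShortExact (LinearMap.range f).subtype g :=
  ⟨Subtype.val_injective, fun y => by simpa using hfg y, hg⟩

theorem exact_rangeRestrict {f : A →ₗ[R] B} {g : B →ₗ[R] C} (hfg : Function.Exact f g) :
    Function.Exact f g.rangeRestrict :=
  fun y => Subtype.ext_iff.trans (hfg y)

theorem isShortExact_rangeRestrict {f : A →ₗ[R] B} {g : B →ₗ[R] C} (hf : Function.Injective f)
    (hfg : Function.Exact f g) : IsShortExact f g.rangeRestrict :=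
  ⟨hf, exact_rangeRestrict hfg, g.surjective_rangeRestrict⟩

theorem isShortExact_equiv_zero (e : A ≃ₗ[R] B) :
    IsShortExact e.toLinearMap (0 : B →ₗ[R] PUnit.{u + 1}) :=
  ⟨e.injective, fun y => by simp, fun _ => ⟨0, Subsingleton.elim _ _⟩⟩

theorem injective_iff_exact_comp {D : Type*} [AddCommGroup D] [Module R D] {f : A →ₗ[R] B}
    {g : B →ₗ[R] C} (hfg : Function.Exact f g) (hg : Function.Surjective g) (k : C →ₗ[R] D) :
    Function.Injective k ↔ Function.Exact f (k ∘ₗ g) := by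
  refine ⟨fun hk => hfg.comp_injective k hk (map_zero k), fun h => ?_⟩
  refine (injective_iff_map_eq_zero k).mpr fun c hc => ?_
  obtain ⟨b, rfl⟩ := hg c
  exact (hfg b).mpr ((h b).mp hc)

end ShortExact

section FreeCover

/-- The free module on the set of all elements of `N`, as a type of its own: unification with the
instances of `N →₀ R` is too slow in iterated syzygies. -/
def FreeCover (R : Type u) [CommRing R] (N : Type u) : Type u := N →₀ R

instance (R : Type u) [CommRing R] (N : Type u) : AddCommGroup (FreeCover R N) :=
  inferInstanceAs (AddCommGroup (N →₀ R))

instance (R : Type u) [CommRing R] (N : Type u) : Module R (FreeCover R N) :=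
  inferInstanceAs (Module R (N →₀ R))

instance (R : Type u) [CommRing R] (N : Type u) : Module.Free R (FreeCover R N) :=
  inferInstanceAs (Module.Free R (N →₀ R))

variable (R : Type u) [CommRing R] (N : Type u) [AddCommGroup N] [Module R N]

/-- The canonical free cover of `N`. -/
def freeCover : FreeCover R N →ₗ[R] N := Finsupp.linearCombination R (id : N → N)

/-- The first syzygy module of `N` with respect to its canonical free cover. -/
abbrev syzygy : Submodule R (FreeCover R N) := LinearMap.ker (freeCover R N)

theorem freeCover_surjective : Function.Surjective (freeCover R N) :=
  Finsupp.linearCombination_id_surjective R N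

theorem isShortExact_freeCover : IsShortExact (syzygy R N).subtype (freeCover R N) :=
  isShortExact_subtype_ker (freeCover_surjective R N)

end FreeCover

/-- The vanishing of `Tor_{i+1}(M, N)`; indices are shifted by one throughout to avoid truncated
subtraction. The definition unfolds the dimension shift along canonical syzygies of `N`, which
gives elementary access to the long exact sequences; it is compared with Mathlib's `Tor` in
`subsingleton_torM_succ_iff`. -/
def TorSuccVanishes (R : Type u) [CommRing R] (M : Type u) [AddCommGroup M] [Module R M] :
    ℕ → ∀ (N : Type u) [AddCommGroup N] [Module R N], Prop
  | 0, N, _, _ => Function.Injective ((syzygy R N).subtype.lTensor M)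
  | i + 1, N, _, _ => TorSuccVanishes R M i (syzygy R N)

namespace TorSuccVanishes

variable {R : Type u} [CommRing R] {A B C M N : Type u} [AddCommGroup A] [Module R A]
  [AddCommGroup B] [Module R B] [AddCommGroup C] [Module R C]
  [AddCommGroup M] [Module R M] [AddCommGroup N] [Module R N]
  {f : A →ₗ[R] B} {g : B →ₗ[R] C}

theorem of_flat_left [Module.Flat R M] (i : ℕ) : TorSuccVanishes R M i N := by
  induction i generalizing N with
  | zero => exact Module.Flat.lTensor_preserves_injective_linearMap _ Subtype.val_injective
  | succ _ ih => exact ih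

theorem rTensor_injective (h : IsShortExact f g) (hC : TorSuccVanishes R C 0 N) :
    Function.Injective (f.rTensor N) := by
  have hN := isShortExact_freeCover R N
  rw [← LinearMap.lTensor_inj_iff_rTensor_inj]
  exact lTensor_injective_of_exact_of_exact_of_rTensor_injective hN.exact hN.surjective h.exact
    h.surjective ((LinearMap.lTensor_inj_iff_rTensor_inj _ _).mp hC)
    (Module.Flat.lTensor_preserves_injective_linearMap _ h.injective)

theorem zero_of_rTensor_injective (h : IsShortExact f g) (hf : Function.Injective (f.rTensor N))
    (hB : TorSuccVanishes R B 0 N) : TorSuccVanishes R C 0 N :=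
  have hN := isShortExact_freeCover R N
  lTensor_injective_of_exact_of_exact_of_rTensor_injective h.exact h.surjective hN.exact
    hN.surjective hf hB

theorem middle (h : IsShortExact f g) (i : ℕ) (hA : TorSuccVanishes R A i N)
    (hC : TorSuccVanishes R C i N) : TorSuccVanishes R B i N := by
  induction i generalizing N with
  | succ i ih => exact ih hA hC
  | zero =>
    let k := (syzygy R N).subtype
    change Function.Injective (k.lTensor A) at hA
    change Function.Injective (k.lTensor C) at hC
    refine (injective_iff_map_eq_zero (k.lTensor B)).mpr fun x hx => ?_
    have hgx : g.rTensor _ x = 0 := hC <| by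
      rw [map_zero, ← LinearMap.comp_apply, LinearMap.lTensor_comp_rTensor,
        ← LinearMap.rTensor_comp_lTensor, LinearMap.comp_apply, hx, map_zero]
    obtain ⟨y, rfl⟩ := (rTensor_exact _ h.exact h.surjective x).mp hgx
    have hky : k.lTensor A y = 0 :=
      Module.Flat.rTensor_preserves_injective_linearMap f h.injective <| by
        rw [map_zero, ← hx, ← LinearMap.comp_apply, ← LinearMap.comp_apply,
          LinearMap.lTensor_comp_rTensor, LinearMap.rTensor_comp_lTensor]
    rw [hA (hky.trans (map_zero _).symm), map_zero]

theorem left (h : IsShortExact f g) (i : ℕ) (hB : TorSuccVanishes R B i N)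
    (hC : TorSuccVanishes R C (i + 1) N) : TorSuccVanishes R A i N := by
  induction i generalizing N with
  | succ i ih => exact ih hB hC
  | zero =>
    have hcomp : Function.Injective
        ((syzygy R N).subtype.lTensor B ∘ₗ f.rTensor (syzygy R N)) :=
      hB.comp (rTensor_injective h hC)
    rw [LinearMap.lTensor_comp_rTensor, ← LinearMap.rTensor_comp_lTensor,
      LinearMap.coe_comp] at hcomp
    exact hcomp.of_comp

theorem right (h : IsShortExact f g) (i : ℕ) (hA : TorSuccVanishes R A i N)
    (hB : TorSuccVanishes R B (i + 1) N) : TorSuccVanishes R C (i + 1) N := by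
  induction i generalizing N with
  | succ i ih => exact ih hA hB
  | zero =>
    refine zero_of_rTensor_injective (N := syzygy R N) h ?_ hB
    have hcomp : Function.Injective
        (f.rTensor (FreeCover R N) ∘ₗ (syzygy R N).subtype.lTensor A) :=
      (Module.Flat.rTensor_preserves_injective_linearMap f h.injective).comp hA
    rw [LinearMap.rTensor_comp_lTensor, ← LinearMap.lTensor_comp_rTensor,
      LinearMap.coe_comp] at hcomp
    exact hcomp.of_comp

theorem succ_iff_left [Module.Flat R B] (h : IsShortExact f g) (i : ℕ) :
    TorSuccVanishes R C (i + 1) N ↔ TorSuccVanishes R A i N :=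
  ⟨fun hC => left h i (of_flat_left i) hC, fun hA => right h i hA (of_flat_left _)⟩

theorem zero_iff_left [Module.Flat R B] (h : IsShortExact f g) :
    TorSuccVanishes R C 0 N ↔ Function.Injective (f.lTensor N) := by
  rw [LinearMap.lTensor_inj_iff_rTensor_inj]
  exact ⟨rTensor_injective h, fun hf => zero_of_rTensor_injective h hf (of_flat_left 0)⟩

theorem comm (i : ℕ) : TorSuccVanishes R M i N ↔ TorSuccVanishes R N i M := by
  induction i generalizing M with
  | zero => exact zero_iff_left (isShortExact_freeCover R M)
  | succ i ih => exact (succ_iff_left (isShortExact_freeCover R M) i).trans ih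

theorem of_flat_right [Module.Flat R N] (i : ℕ) : TorSuccVanishes R M i N :=
  (comm i).mpr (of_flat_left i)

theorem succ_iff_right [Module.Flat R B] (h : IsShortExact f g) (i : ℕ) :
    TorSuccVanishes R M (i + 1) C ↔ TorSuccVanishes R M i A := by
  rw [comm, succ_iff_left h, comm]

theorem zero_iff_right [Module.Flat R B] (h : IsShortExact f g) :
    TorSuccVanishes R M 0 C ↔ Function.Injective (f.lTensor M) := by
  rw [comm, zero_iff_left h]

theorem congr_left (e : A ≃ₗ[R] B) {i : ℕ} (hA : TorSuccVanishes R A i N) :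
    TorSuccVanishes R B i N :=
  middle (isShortExact_equiv_zero e) i hA (of_flat_left i)

end TorSuccVanishes

section Tor

namespace TorSuccVanishes

theorem iff_exact_of_flat_resolution {R : Type u} [CommRing R] {M : Type u} [AddCommGroup M]
    [Module R M] (i : ℕ) {N : Type u} [AddCommGroup N] [Module R N] (P : ℕ → Type u)
    [∀ n, AddCommGroup (P n)] [∀ n, Module R (P n)] [∀ n, Module.Flat R (P n)]
    (d : ∀ n, P (n + 1) →ₗ[R] P n) (π : P 0 →ₗ[R] N) (hπ : Function.Surjective π)
    (h0 : Function.Exact (d 0) π) (hd : ∀ n, Function.Exact (d (n + 1)) (d n)) :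
    TorSuccVanishes R M i N ↔ Function.Exact ((d (i + 1)).lTensor M) ((d i).lTensor M) := by
  induction i generalizing N P with
  | zero =>
    rw [zero_iff_right (isShortExact_subtype_range h0 hπ),
      injective_iff_exact_comp (lTensor_exact M (exact_rangeRestrict (hd 0))
        (d 0).surjective_rangeRestrict)
        (LinearMap.lTensor_surjective M (d 0).surjective_rangeRestrict),
      ← LinearMap.lTensor_comp]
    rfl
  | succ i ih =>
    rw [succ_iff_right (isShortExact_subtype_range h0 hπ)]
    exact ih (fun n => P (n + 1)) (fun n => d (n + 1)) _ (d 0).surjective_rangeRestrict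
      (exact_rangeRestrict (hd 0)) (fun n => hd (n + 1))

end TorSuccVanishes

theorem subsingleton_torM_succ_iff {R : Type u} [CommRing R] {M N : Type u} [AddCommGroup M]
    [Module R M] [AddCommGroup N] [Module R N] (i : ℕ) :
    Subsingleton (TorM R (i + 1) M N) ↔ TorSuccVanishes R M i N := by
  obtain ⟨P⟩ := (inferInstance : HasProjectiveResolution (ModuleCat.of R N)).out
  let F := (MonoidalCategory.tensoringLeft (ModuleCat.{u} R)).obj (ModuleCat.of R M)
  have hflat (n : ℕ) : Module.Flat R (P.complex.X n) :=
    have := (IsProjective.iff_projective (P.complex.X n)).mpr (P.projective n)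
    inferInstance
  have hexact (S : ShortComplex (ModuleCat.{u} R)) : S.Exact ↔ Function.Exact S.f S.g :=
    ShortComplex.ShortExact.moduleCat_exact_iff_function_exact S
  calc Subsingleton (TorM R (i + 1) M N)
    _ ↔ Limits.IsZero ((F.leftDerived (i + 1)).obj (ModuleCat.of R N)) :=
      ModuleCat.isZero_iff_subsingleton.symm
    _ ↔ Limits.IsZero (((F.mapHomologicalComplex _).obj P.complex).homology (i + 1)) :=
      (P.isoLeftDerivedObj F (i + 1)).isZero_iff
    _ ↔ Function.Exact ((P.complex.d (i + 2) (i + 1)).hom.lTensor M)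
          ((P.complex.d (i + 1) i).hom.lTensor M) := by
      rw [← HomologicalComplex.exactAt_iff_isZero_homology,
        HomologicalComplex.exactAt_iff' _ (i + 2) (i + 1) i (by simp) (by simp), hexact]
      rfl
    _ ↔ TorSuccVanishes R M i N :=
      (TorSuccVanishes.iff_exact_of_flat_resolution i (fun n => P.complex.X n)
        (fun n => (P.complex.d (n + 1) n).hom) (P.π.f 0).hom
        ((ModuleCat.epi_iff_surjective _).mp inferInstance) ((hexact _).mp P.exact₀)
        fun n => (hexact _).mp (P.exact_succ n)).symm

end Tor

section BaseChange

open TensorProduct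

theorem lTensor_baseChange_injective_iff {Q S A B : Type*} [CommRing Q] [CommRing S]
    [Algebra Q S] [AddCommGroup A] [Module Q A] [AddCommGroup B] [Module Q B] {P : Type*}
    [AddCommGroup P] [Module Q P] [Module S P] [IsScalarTower Q S P] (f : A →ₗ[Q] B) :
    Function.Injective ((f.baseChange S).lTensor P) ↔ Function.Injective (f.lTensor P) := by
  let eA := AlgebraTensorModule.cancelBaseChange Q S S P A
  let eB := AlgebraTensorModule.cancelBaseChange Q S S P B
  have hcomm : eB.toLinearMap ∘ₗ (f.baseChange S).lTensor P =
      AlgebraTensorModule.lTensor S P f ∘ₗ eA.toLinearMap := by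
    ext p a
    simp [eA, eB]
  rw [← EquivLike.comp_injective _ eB, ← EquivLike.injective_comp eA]
  exact iff_of_eq (congrArg Function.Injective (congrArg DFunLike.coe hcomm))

namespace TorSuccVanishes

variable {Q S : Type u} [CommRing Q] [CommRing S] [Algebra Q S]
  {M N : Type u} [AddCommGroup M] [Module Q M] [AddCommGroup N] [Module Q N]

theorem isShortExact_baseChange {A B C : Type u} [AddCommGroup A] [Module Q A] [AddCommGroup B]
    [Module Q B] [Module.Flat Q B] [AddCommGroup C] [Module Q C] {f : A →ₗ[Q] B} {g : B →ₗ[Q] C}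
    (h : IsShortExact f g) (hC : TorSuccVanishes Q C 0 S) :
    IsShortExact (f.baseChange S) (g.baseChange S) :=
  ⟨(zero_iff_left h).mp hC, lTensor_exact _ h.exact h.surjective,
    LinearMap.lTensor_surjective _ h.surjective⟩

theorem baseChange_iff [Module S N] [IsScalarTower Q S N]
    (hM : ∀ j, TorSuccVanishes Q M j S) (i : ℕ) :
    TorSuccVanishes S (S ⊗[Q] M) i N ↔ TorSuccVanishes Q M i N := by
  induction i generalizing M with
  | zero =>
    have hcover := isShortExact_freeCover Q M
    rw [zero_iff_left hcover, zero_iff_left (isShortExact_baseChange hcover (hM 0)),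
      lTensor_baseChange_injective_iff]
  | succ i ih =>
    have hcover := isShortExact_freeCover Q M
    rw [succ_iff_left hcover, succ_iff_left (isShortExact_baseChange hcover (hM 0))]
    exact ih fun j => (succ_iff_left hcover j).mp (hM (j + 1))

theorem tensor_right_iff [Module.FaithfullyFlat Q S] (i : ℕ) :
    TorSuccVanishes Q M i (S ⊗[Q] N) ↔ TorSuccVanishes Q M i N := by
  induction i generalizing M with
  | zero =>
    rw [zero_iff_left (isShortExact_freeCover Q M), zero_iff_left (isShortExact_freeCover Q M),
      LinearMap.lTensor_tensor]
    simp [Module.FaithfullyFlat.lTensor_injective_iff_injective Q S]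
  | succ i ih =>
    rw [succ_iff_left (isShortExact_freeCover Q M), succ_iff_left (isShortExact_freeCover Q M), ih]

theorem faithfullyFlat_iff [Module.FaithfullyFlat Q S] (i : ℕ) :
    TorSuccVanishes S (S ⊗[Q] M) i (S ⊗[Q] N) ↔ TorSuccVanishes Q M i N :=
  (baseChange_iff (fun _ => of_flat_right _) i).trans (tensor_right_iff i)

end TorSuccVanishes

end BaseChange

section ChangeOfRings

open TensorProduct

variable {Q R : Type u} [CommRing Q] [CommRing R] [Algebra Q R] {f : Q}

theorem isSMulRegular_of_flat (hf : IsSMulRegular Q f) (G : Type*) [AddCommGroup G] [Module Q G]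
    [Module.Flat Q G] : IsSMulRegular G f :=
  ((TensorProduct.rid Q G).isSMulRegular_congr f).mp (hf.lTensor G)

theorem exact_lsmul_mk_one (hR : IsShortExact (LinearMap.lsmul Q Q f) (Algebra.linearMap Q R))
    (K : Type*) [AddCommGroup K] [Module Q K] :
    Function.Exact (LinearMap.lsmul Q K f) (TensorProduct.mk Q R K 1) := by
  have hK := rTensor_exact K hR.exact hR.surjective
  refine (Function.Exact.iff_of_ladder_linearEquiv (e₁ := TensorProduct.lid Q K)
    (e₂ := TensorProduct.lid Q K) (e₃ := LinearEquiv.refl Q (R ⊗[Q] K)) ?_ ?_).mpr hK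
  all_goals ext; simp

theorem exists_injective_exact_baseChange
    (hR : IsShortExact (LinearMap.lsmul Q Q f) (Algebra.linearMap Q R))
    {K G M : Type*} [AddCommGroup K] [Module Q K] [AddCommGroup G] [Module Q G] [AddCommGroup M]
    [Module Q M] [Module R M] [IsScalarTower Q R M] {k : K →ₗ[Q] G} {p : G →ₗ[Q] M}
    (h : IsShortExact k p) (hG : IsSMulRegular G f) :
    ∃ δ : M →ₗ[R] R ⊗[Q] K, Function.Injective δ ∧ Function.Exact δ (k.baseChange R) := by
  have hf : algebraMap Q R f = 0 := by simpa using hR.exact.apply_apply_eq_zero 1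
  have hfM (m : M) : f • m = 0 := by rw [← algebraMap_smul R, hf, zero_smul]
  have hK := exact_lsmul_mk_one hR K
  have hG' := exact_lsmul_mk_one hR G
  have h₁ : k.comp (LinearMap.lsmul Q K f) = (LinearMap.lsmul Q G f).comp k := by ext; simp
  have h₂ : p.comp (LinearMap.lsmul Q G f) = (LinearMap.lsmul Q M f).comp p := by ext; simp
  have hι : Function.Exact (0 : PUnit.{1} →ₗ[Q] G) (LinearMap.lsmul Q G f) := by
    rw [LinearMap.exact_zero_iff_injective]
    exact hG
  have hι' : Function.Exact (LinearMap.id : M →ₗ[Q] M) (LinearMap.lsmul Q M f) := fun m => by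
    simp [hfM]
  let δ := SnakeLemma.δ' _ _ _ k p h.exact k p h.exact h₁ h₂ LinearMap.id hι' _ hK
    h.surjective h.injective
  refine ⟨δ.extendScalarsOfSurjective hR.surjective, ?_, ?_⟩
  · exact (LinearMap.exact_zero_iff_injective PUnit.{1} δ).mp
      (SnakeLemma.exact_δ'_right (hf := h.exact) (hg := h.exact) _ _ _ _ _ _ _ h₁ h₂ _ hι _ hι' _
        hK _ _ 0 (by simp) Function.injective_id)
  · exact SnakeLemma.exact_δ'_left (hf := h.exact) (hg := h.exact) _ _ _ _ _ _ _ h₁ h₂ _ hι' _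
      hK _ hG' h.surjective h.injective (k.lTensor R) (by ext; simp)
      (TensorProduct.mk_surjective Q K R hR.surjective)

theorem exists_isShortExact_baseChange_syzygy
    (hR : IsShortExact (LinearMap.lsmul Q Q f) (Algebra.linearMap Q R))
    (M : Type u) [AddCommGroup M] [Module Q M] [Module R M] [IsScalarTower Q R M] :
    ∃ (Z : Type u) (_ : AddCommGroup Z) (_ : Module R Z) (a : M →ₗ[R] R ⊗[Q] syzygy Q M)
      (b : R ⊗[Q] syzygy Q M →ₗ[R] Z) (k : Z →ₗ[R] R ⊗[Q] FreeCover Q M)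
      (p : R ⊗[Q] FreeCover Q M →ₗ[R] M), IsShortExact a b ∧ IsShortExact k p := by
  have := Algebra.isEpi_of_surjective_algebraMap Q R hR.surjective
  have hM := isShortExact_freeCover Q M
  obtain ⟨δ, hδ, hδk⟩ :=
    exists_injective_exact_baseChange hR hM (isSMulRegular_of_flat hR.injective _)
  let k := (syzygy Q M).subtype.baseChange R
  have hexact : Function.Exact k ((freeCover Q M).baseChange R) :=
    lTensor_exact R hM.exact hM.surjective
  have hsurj : Function.Surjective ((freeCover Q M).baseChange R) :=
    LinearMap.lTensor_surjective R hM.surjective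
  let e : R ⊗[Q] M ≃ₗ[R] M := TensorProduct.lid' Q R M
  exact ⟨LinearMap.range k, inferInstance, inferInstance, δ, _, _,
    e.toLinearMap ∘ₗ (freeCover Q M).baseChange R, isShortExact_rangeRestrict hδ hδk,
    isShortExact_subtype_range (LinearEquiv.postcomp_exact_iff_exact.mpr hexact)
      (e.surjective.comp hsurj)⟩

namespace TorSuccVanishes

theorem of_isSMulRegular (hR : IsShortExact (LinearMap.lsmul Q Q f) (Algebra.linearMap Q R))
    {K : Type u} [AddCommGroup K] [Module Q K] (hK : IsSMulRegular K f) (j : ℕ) :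
    TorSuccVanishes Q K j R := by
  cases j with
  | succ j => exact (succ_iff_right hR j).mpr (of_flat_right j)
  | zero =>
    have hlsmul : (LinearMap.lsmul Q Q f).lTensor K = LinearMap.lsmul Q (K ⊗[Q] Q) f :=
      LinearMap.lTensor_smul_action K Q f
    rw [zero_iff_right hR, hlsmul]
    exact ((TensorProduct.rid Q K).isSMulRegular_congr f).mpr hK

variable {M N : Type u} [AddCommGroup M] [Module Q M] [Module R M] [IsScalarTower Q R M]
  [AddCommGroup N] [Module Q N] [Module R N] [IsScalarTower Q R N]

theorem succ_iff_baseChange_syzygy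
    (hR : IsShortExact (LinearMap.lsmul Q Q f) (Algebra.linearMap Q R))
    {M : Type u} [AddCommGroup M] [Module Q M] (i : ℕ) :
    TorSuccVanishes Q M (i + 1) N ↔ TorSuccVanishes R (R ⊗[Q] syzygy Q M) i N := by
  have hK : IsSMulRegular (syzygy Q M) f :=
    IsSMulRegular.submodule _ _ (isSMulRegular_of_flat hR.injective _)
  rw [succ_iff_left (isShortExact_freeCover Q M), baseChange_iff (of_isSMulRegular hR hK)]

theorem succ_restrictScalars
    (hR : IsShortExact (LinearMap.lsmul Q Q f) (Algebra.linearMap Q R)) {i : ℕ}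
    (hi : TorSuccVanishes R M i N) (hi' : TorSuccVanishes R M (i + 1) N) :
    TorSuccVanishes Q M (i + 1) N := by
  obtain ⟨Z, _, _, _, _, _, _, hab, hp⟩ := exists_isShortExact_baseChange_syzygy hR M
  exact (succ_iff_baseChange_syzygy hR i).mpr (middle hab i hi ((succ_iff_left hp i).mp hi'))

theorem of_restrictScalars_succ
    (hR : IsShortExact (LinearMap.lsmul Q Q f) (Algebra.linearMap Q R)) {i : ℕ}
    (hQ : TorSuccVanishes Q M (i + 1) N) (hi : TorSuccVanishes R M (i + 2) N) :
    TorSuccVanishes R M i N := by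
  obtain ⟨Z, _, _, _, _, _, _, hab, hp⟩ := exists_isShortExact_baseChange_syzygy hR M
  exact left hab i ((succ_iff_baseChange_syzygy hR i).mp hQ) ((succ_iff_left hp (i + 1)).mp hi)

theorem eventually_restrictScalars
    (hR : IsShortExact (LinearMap.lsmul Q Q f) (Algebra.linearMap Q R))
    (h : ∃ n, ∀ i ≥ n, TorSuccVanishes R M i N) : ∃ n, ∀ i ≥ n, TorSuccVanishes Q M i N := by
  obtain ⟨n, hn⟩ := h
  refine ⟨n + 1, fun i hi => ?_⟩
  obtain ⟨j, rfl⟩ := Nat.exists_eq_add_of_le' hi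
  exact succ_restrictScalars hR (hn (j + n) (by omega)) (hn (j + n + 1) (by omega))

theorem of_restrictScalars_of_eventually
    (hR : IsShortExact (LinearMap.lsmul Q Q f) (Algebra.linearMap Q R)) {e : ℕ}
    (hQ : ∀ i ≥ e + 1, TorSuccVanishes Q M i N) (h : ∃ n, ∀ i ≥ n, TorSuccVanishes R M i N) :
    ∀ i ≥ e, TorSuccVanishes R M i N := by
  obtain ⟨n, hn⟩ := h
  have hdescend (k : ℕ) : ∀ i ≥ e, n ≤ i + 2 * k → TorSuccVanishes R M i N := by
    induction k with
    | zero => exact fun i _ hi => hn i hi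
    | succ k ih =>
      exact fun i hi hik => of_restrictScalars_succ hR (hQ (i + 1) (by omega))
        (ih (i + 2) (by omega) (by omega))
  exact fun i hi => hdescend n i hi (by omega)

end TorSuccVanishes

end ChangeOfRings

section RegularSequence

open TensorProduct

variable {Q S : Type u} [CommRing Q] [CommRing S] [Algebra Q S]

theorem isShortExact_lsmul_linearMap {f : Q} (hf : IsSMulRegular Q f)
    (hS : Function.Surjective (algebraMap Q S))
    (hker : RingHom.ker (algebraMap Q S) = Ideal.span {f}) :
    IsShortExact (LinearMap.lsmul Q Q f) (Algebra.linearMap Q S) :=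
  ⟨hf, fun y => by
    rw [Algebra.linearMap_apply, ← RingHom.mem_ker, hker, Ideal.mem_span_singleton']
    simp [mul_comm f], hS⟩

theorem isShortExact_lsmul_linearMap_quotient {I : Ideal Q} [Algebra (Q ⧸ I) S]
    [IsScalarTower Q (Q ⧸ I) S] {f : Q} (hf : IsSMulRegular (Q ⧸ I) f)
    (hS : Function.Surjective (algebraMap Q S))
    (hker : RingHom.ker (algebraMap Q S) = I ⊔ Ideal.span {f}) :
    IsShortExact (LinearMap.lsmul (Q ⧸ I) (Q ⧸ I) (algebraMap Q (Q ⧸ I) f))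
      (Algebra.linearMap (Q ⧸ I) S) := by
  have hmap : algebraMap Q S = (algebraMap (Q ⧸ I) S).comp (Ideal.Quotient.mk I) :=
    IsScalarTower.algebraMap_eq Q (Q ⧸ I) S
  refine isShortExact_lsmul_linearMap ((isSMulRegular_algebraMap_iff _).mpr hf)
    (.of_comp (g := Ideal.Quotient.mk I) (by rwa [← RingHom.coe_comp, ← hmap])) ?_
  rw [← Ideal.map_comap_of_surjective _ Ideal.Quotient.mk_surjective (RingHom.ker _),
    RingHom.comap_ker, ← hmap, hker, Ideal.map_sup, Ideal.map_quotient_self, bot_sup_eq,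
    Ideal.map_span, Set.image_singleton]
  rfl

theorem TorSuccVanishes.restrictScalars_iff [Module.Flat Q S] [Algebra.IsEpi Q S] {M N : Type u}
    [AddCommGroup M] [Module Q M] [Module S M] [IsScalarTower Q S M]
    [AddCommGroup N] [Module Q N] [Module S N] [IsScalarTower Q S N] (i : ℕ) :
    TorSuccVanishes S M i N ↔ TorSuccVanishes Q M i N :=
  have e : S ⊗[Q] M ≃ₗ[S] M := TensorProduct.lid' Q S M
  .trans ⟨congr_left e.symm, congr_left e⟩ (baseChange_iff (fun _ => of_flat_right _) i)

theorem TorSuccVanishes.of_restrictScalars_of_isWeaklyRegular {rs : List Q}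
    (hrs : IsWeaklyRegular Q rs) (hS : Function.Surjective (algebraMap Q S))
    (hker : RingHom.ker (algebraMap Q S) = Ideal.ofList rs) {M N : Type u}
    [AddCommGroup M] [Module Q M] [Module S M] [IsScalarTower Q S M]
    [AddCommGroup N] [Module Q N] [Module S N] [IsScalarTower Q S N] {e : ℕ}
    (hQ : ∀ i ≥ e + rs.length, TorSuccVanishes Q M i N)
    (h : ∃ n, ∀ i ≥ n, TorSuccVanishes S M i N) : ∀ i ≥ e, TorSuccVanishes S M i N := by
  induction rs using List.reverseRecOn generalizing S e with
  | nil =>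
    have hbij : Function.Bijective (algebraMap Q S) :=
      ⟨(RingHom.injective_iff_ker_eq_bot _).mpr (hker.trans Ideal.ofList_nil), hS⟩
    have : Module.Flat Q S :=
      .of_linearEquiv (LinearEquiv.ofBijective (Algebra.linearMap Q S) hbij).symm
    have := Algebra.isEpi_of_surjective_algebraMap Q S hS
    exact fun i hi => (restrictScalars_iff i).mpr (hQ i hi)
  | append_singleton rs f ih =>
    obtain ⟨hrs, hf⟩ := (isWeaklyRegular_append_iff Q rs [f]).mp hrs
    let Q' := Q ⧸ Ideal.ofList rs
    rw [Ideal.ofList_append, Ideal.ofList_singleton] at hker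
    rw [isWeaklyRegular_singleton_iff, smul_eq_mul, Ideal.mul_top] at hf
    let φ : Q' →+* S := Ideal.Quotient.lift _ (algebraMap Q S) fun a ha =>
      RingHom.mem_ker.mp (hker ▸ Ideal.mem_sup_left ha)
    let := φ.toAlgebra
    let := Module.compHom M φ
    let := Module.compHom N φ
    have : IsScalarTower Q Q' S := .of_algebraMap_eq fun _ => rfl
    have : IsScalarTower Q' S M := .of_algebraMap_smul fun _ _ => rfl
    have : IsScalarTower Q' S N := .of_algebraMap_smul fun _ _ => rfl
    have : IsScalarTower Q Q' M := .of_algebraMap_smul (algebraMap_smul S)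
    have : IsScalarTower Q Q' N := .of_algebraMap_smul (algebraMap_smul S)
    have hS' := isShortExact_lsmul_linearMap_quotient hf hS hker
    refine of_restrictScalars_of_eventually hS' ?_ h
    refine ih (S := Q') hrs Ideal.Quotient.mk_surjective Ideal.mk_ker (fun i hi => hQ i ?_)
      (eventually_restrictScalars hS' h)
    grind

end RegularSequence

section RegularLocal

open TensorProduct Pointwise IsLocalRing

theorem isShortExact_lsmul_mkQ {R M : Type*} [CommRing R] [AddCommGroup M] [Module R M] {x : R}
    (hx : IsSMulRegular M x) :
    IsShortExact (LinearMap.lsmul R M x) (x • (⊤ : Submodule R M)).mkQ :=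
  ⟨hx, fun y => by simp [Submodule.mem_smul_pointwise_iff_exists], Submodule.mkQ_surjective _⟩

/- A map `t` with `t ∘ incl = y` is the start of a null-homotopy for multiplication by `y` on the
canonical resolution of `N`. -/
theorem exists_comp_subtype_syzygy_eq_lsmul {R : Type u} [CommRing R] {N : Type u}
    [AddCommGroup N] [Module R N] {y : R} {t : FreeCover R N →ₗ[R] syzygy R N}
    (ht : t ∘ₗ (syzygy R N).subtype = LinearMap.lsmul R _ y) :
    ∃ t' : FreeCover R (syzygy R N) →ₗ[R] syzygy R (syzygy R N),
      t' ∘ₗ (syzygy R (syzygy R N)).subtype = LinearMap.lsmul R _ y := by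
  let π := freeCover R (syzygy R N)
  obtain ⟨s, hs⟩ := Module.projective_lifting_property π t (freeCover_surjective R _)
  have hπ (x : FreeCover R (syzygy R N)) : π (s (π x)) = y • π x :=
    (LinearMap.congr_fun hs _).trans (LinearMap.congr_fun ht (π x))
  let t' := LinearMap.lsmul R _ y - s ∘ₗ (syzygy R N).subtype ∘ₗ π
  refine ⟨t'.codRestrict _ fun x => ?_, ?_⟩
  · rw [LinearMap.mem_ker]
    simp [t', hπ, π]
  · ext z
    have hz : π z = 0 := z.2
    simp [t', hz]

namespace TorSuccVanishes

variable {R : Type u} [CommRing R] {M N : Type u} [AddCommGroup M] [Module R M]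
  [AddCommGroup N] [Module R N]

theorem quotient_ofList {xs : List R} (hM : IsWeaklyRegular M xs) {a : ℕ}
    (h : ∀ i ≥ a, TorSuccVanishes R M i N) :
    ∀ i ≥ a + xs.length,
      TorSuccVanishes R (M ⧸ Ideal.ofList xs • (⊤ : Submodule R M)) i N := by
  induction xs generalizing M a with
  | nil =>
    have hbot : Ideal.ofList ([] : List R) • (⊤ : Submodule R M) = ⊥ := by simp
    exact fun i hi => congr_left (Submodule.quotEquivOfEqBot _ hbot).symm (h i hi)
  | cons x xs ih =>
    obtain ⟨hx, hxs⟩ := (isWeaklyRegular_cons_iff M x xs).mp hM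
    have hquot : ∀ i ≥ a + 1, TorSuccVanishes R (QuotSMulTop x M) i N := fun i hi => by
      obtain ⟨j, rfl⟩ := Nat.exists_eq_add_of_le' (show 1 ≤ i by omega)
      exact right (isShortExact_lsmul_mkQ hx) j (h j (by omega)) (h (j + 1) (by omega))
    exact fun i hi => congr_left (Submodule.quotOfListConsSMulTopEquivQuotSMulTopInner M x xs).symm
      (ih hxs hquot i (by grind))

theorem of_quotSMulTop_of_comp_subtype {y : R} (hy : IsSMulRegular M y) {i : ℕ}
    {t : FreeCover R N →ₗ[R] syzygy R N}
    (ht : t ∘ₗ (syzygy R N).subtype = LinearMap.lsmul R _ y)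
    (h : TorSuccVanishes R (QuotSMulTop y M) (i + 1) N) : TorSuccVanishes R M i N := by
  induction i generalizing N with
  | zero =>
    have hinj : Function.Injective ((LinearMap.lsmul R M y).rTensor (syzygy R N)) :=
      rTensor_injective (isShortExact_lsmul_mkQ hy) h
    have hcomp : t.lTensor M ∘ₗ (syzygy R N).subtype.lTensor M =
        (LinearMap.lsmul R M y).rTensor (syzygy R N) := by
      rw [← LinearMap.lTensor_comp, ht]
      exact TensorProduct.ext' fun m z => by simp [TensorProduct.smul_tmul]
    rw [← hcomp, LinearMap.coe_comp] at hinj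
    exact hinj.of_comp
  | succ i ih =>
    obtain ⟨t', ht'⟩ := exists_comp_subtype_syzygy_eq_lsmul ht
    exact ih ht' h

theorem of_quotSMulTop {y : R} (hM : IsSMulRegular M y) (hN : ∀ n : N, y • n = 0) {i : ℕ}
    (h : TorSuccVanishes R (QuotSMulTop y M) (i + 1) N) : TorSuccVanishes R M i N :=
  of_quotSMulTop_of_comp_subtype hM
    (t := (LinearMap.lsmul R _ y).codRestrict _ fun x => by simp [hN]) rfl h

theorem of_quotient_ofList {ys : List R} (hM : IsWeaklyRegular M ys)
    (hN : ∀ y ∈ ys, ∀ n : N, y • n = 0) {i : ℕ}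
    (h : TorSuccVanishes R (M ⧸ Ideal.ofList ys • (⊤ : Submodule R M)) (i + ys.length) N) :
    TorSuccVanishes R M i N := by
  induction ys generalizing M i with
  | nil =>
    have hbot : Ideal.ofList ([] : List R) • (⊤ : Submodule R M) = ⊥ := by simp
    exact congr_left (Submodule.quotEquivOfEqBot _ hbot) h
  | cons y ys ih =>
    obtain ⟨hy, hys⟩ := (isWeaklyRegular_cons_iff M y ys).mp hM
    refine of_quotSMulTop hy (hN y List.mem_cons_self)
      (ih hys (fun z hz => hN z (List.mem_cons_of_mem y hz)) ?_)
    rw [show i + 1 + ys.length = i + (y :: ys).length by grind]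
    exact congr_left (Submodule.quotOfListConsSMulTopEquivQuotSMulTopInner M y ys) h

theorem of_residueField [IsLocalRing R] [IsNoetherianRing R] [Module.Finite R M] {e : ℕ}
    (h : ∀ i ≥ e, TorSuccVanishes R M i (ResidueField R)) :
    ∀ i ≥ e, TorSuccVanishes R M i N := by
  induction e generalizing M with
  | zero =>
    obtain ⟨n, f, hf⟩ := Module.Finite.exists_fin' R M
    have hker := isShortExact_subtype_ker hf
    have : Module.Free R M := Module.free_of_lTensor_residueField_injective _ f hf hker.exact
      ((LinearMap.lTensor_inj_iff_rTensor_inj _ _).mpr (rTensor_injective hker (h 0 le_rfl)))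
    exact fun i _ => of_flat_left i
  | succ e ih =>
    obtain ⟨n, f, hf⟩ := Module.Finite.exists_fin' R M
    have hker := isShortExact_subtype_ker hf
    intro i hi
    obtain ⟨j, rfl⟩ := Nat.exists_eq_add_of_le' (show 1 ≤ i by omega)
    exact (succ_iff_left hker j).mpr (ih
      (fun k hk => (succ_iff_left hker k).mp (h (k + 1) (by omega))) j (by omega))

/- Auslander–Buchsbaum: over a regular local ring, `pd M ≤ dim R - depth M`. -/
theorem of_isWeaklyRegular [IsLocalRing R] [IsNoetherianRing R] [Module.Finite R M]
    {xs : List R} (hxs : IsWeaklyRegular R xs) (hmax : Ideal.ofList xs = maximalIdeal R)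
    {ys : List R} (hys : IsWeaklyRegular M ys) (hmem : ∀ y ∈ ys, y ∈ maximalIdeal R)
    {c : ℕ} (hc : xs.length ≤ c + ys.length) : ∀ i ≥ c, TorSuccVanishes R M i N := by
  refine of_residueField fun i hi => of_quotient_ofList hys (fun y hy n => ?_) ?_
  · rw [← algebraMap_smul (ResidueField R), ResidueField.algebraMap_eq,
      (residue_eq_zero_iff y).mpr (hmem y hy), zero_smul]
  · have hres : Ideal.ofList xs • (⊤ : Submodule R R) = maximalIdeal R := by simp [hmax]
    rw [comm]
    exact congr_left (B := R ⧸ maximalIdeal R) (Submodule.quotEquivOfEq _ _ hres)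
      (quotient_ofList (a := 0) hxs (fun i _ => of_flat_left i) _ (by omega))

end TorSuccVanishes

end RegularLocal

section Dimension

open IsLocalRing

theorem length_le_ringKrullDim_of_isWeaklyRegular {Q : Type*} [CommRing Q] [IsLocalRing Q]
    [IsNoetherianRing Q] {xs : List Q} (hxs : IsWeaklyRegular Q xs)
    (hmem : ∀ x ∈ xs, x ∈ maximalIdeal Q) : (xs.length : WithBot ℕ∞) ≤ ringKrullDim Q := by
  have hreg := IsRegular.of_isWeaklyRegular_of_mem_maximalIdeal Q hmem hxs
  have : Nontrivial (Q ⧸ Ideal.ofList xs) :=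
    Ideal.Quotient.nontrivial_iff.mpr
      ((Ideal.span_le.mpr hmem).trans_lt (maximalIdeal.isMaximal Q).ne_top.lt_top).ne
  rw [← ringKrullDim_add_length_eq_ringKrullDim_of_isRegular xs hreg]
  exact le_add_of_nonneg_left ringKrullDim_nonneg_of_nontrivial

theorem ringKrullDim_le_add_length {Q S : Type*} [CommRing Q] [IsLocalRing Q]
    [IsNoetherianRing Q] [CommRing S] [Algebra Q S] (hS : Function.Surjective (algebraMap Q S))
    {rs : List Q} (hmem : ∀ r ∈ rs, r ∈ maximalIdeal Q)
    (hker : RingHom.ker (algebraMap Q S) = Ideal.ofList rs) :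
    ringKrullDim Q ≤ ringKrullDim S + rs.length := by
  classical
  have hspan : Ideal.span (rs.toFinset : Set Q) = RingHom.ker (algebraMap Q S) := by
    simp [hker, Ideal.ofList]
  have hle := ringKrullDim_le_ringKrullDim_quotient_add_card rs.toFinset fun r hr =>
    ringJacobson_eq_maximalIdeal Q ▸ hmem r (by simpa using hr)
  rw [hspan, ringKrullDim_eq_of_ringEquiv (RingHom.quotientKerEquivOfSurjective hS)] at hle
  exact hle.trans (add_le_add_right (by exact_mod_cast rs.toFinset_card_le) _)

theorem ringKrullDim_le_of_maximalIdeal_eq_map {R S : Type*} [CommRing R] [IsLocalRing R]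
    [IsNoetherianRing R] [CommRing S] [IsLocalRing S] [IsNoetherianRing S] [Algebra R S]
    [IsLocalHom (algebraMap R S)]
    (hmap : maximalIdeal S = (maximalIdeal R).map (algebraMap R S)) :
    ringKrullDim S ≤ ringKrullDim R := by
  have hle := Ideal.height_le_height_add_of_liesOver (maximalIdeal R) (maximalIdeal S)
  rw [← hmap, Ideal.map_quotient_self, Ideal.height_bot, add_zero] at hle
  rw [← maximalIdeal_height_eq_ringKrullDim, ← maximalIdeal_height_eq_ringKrullDim]
  exact_mod_cast hle

theorem exists_isWeaklyRegular_of_le_rdepth {A : Type u} [CommRing A] {M : Type u}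
    [AddCommGroup M] [Module A M] {d : ℕ} (h : (d : ℕ∞) ≤ rdepth A M) :
    ∃ rs : List A, (∀ r ∈ rs, r ∈ nonunits A) ∧ IsWeaklyRegular M rs ∧ d ≤ rs.length := by
  cases d with
  | zero => exact ⟨[], by simp⟩
  | succ d =>
    have hlt : (d : ℕ∞) < rdepth A M := lt_of_lt_of_le (by exact_mod_cast d.lt_succ_self) h
    obtain ⟨_, ⟨rs, rfl, hmem, hrs⟩, hlen⟩ := lt_sSup_iff.mp hlt
    exact ⟨rs, hmem, hrs, by exact_mod_cast hlen⟩

theorem exists_isWeaklyRegular_of_ringKrullDim_le_rdepth_add {R : Type u} [CommRing R]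
    [IsLocalRing R] [IsNoetherianRing R] {M : Type u} [AddCommGroup M] [Module R M] {c : ℕ}
    (h : ringKrullDim R ≤ ((rdepth R M + c : ℕ∞) : WithBot ℕ∞)) :
    ∃ rs : List R, (∀ r ∈ rs, r ∈ nonunits R) ∧ IsWeaklyRegular M rs ∧
      ringKrullDim R ≤ rs.length + c := by
  obtain ⟨d, hd⟩ := ENat.ne_top_iff_exists.mp
    (Ideal.height_ne_top (maximalIdeal.isMaximal R).ne_top)
  rw [← maximalIdeal_height_eq_ringKrullDim, ← hd] at h ⊢
  have hdepth : ((d - c : ℕ) : ℕ∞) ≤ rdepth R M := by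
    rw [ENat.natCast_sub]
    exact tsub_le_iff_right.mpr (by exact_mod_cast h)
  obtain ⟨rs, hmem, hrs, hlen⟩ := exists_isWeaklyRegular_of_le_rdepth hdepth
  exact ⟨rs, hmem, hrs, by exact_mod_cast (by omega : d ≤ rs.length + c)⟩

end Dimension

section CompleteIntersection

open TensorProduct IsLocalRing

theorem span_nonunits (A : Type*) [CommRing A] [IsLocalRing A] :
    Ideal.span (nonunits A) = maximalIdeal A :=
  Ideal.span_eq (maximalIdeal A)

namespace TorSuccVanishes

theorem of_eventually_of_isRegLocal {Q S : Type u} [CommRing Q] [CommRing S] [IsLocalRing S]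
    [Algebra Q S] (hQ : IsRegLocal Q) {rs : List Q} (hmem : ∀ r ∈ rs, r ∈ nonunits Q)
    (hrs : IsWeaklyRegular Q rs) (hS : Function.Surjective (algebraMap Q S))
    (hker : RingHom.ker (algebraMap Q S) = Ideal.ofList rs) {M N : Type u}
    [AddCommGroup M] [Module S M] [Module.Finite S M] [AddCommGroup N] [Module S N]
    {ys : List S} (hymem : ∀ y ∈ ys, y ∈ nonunits S) (hys : IsWeaklyRegular M ys) {c : ℕ}
    (hdim : ringKrullDim S ≤ ys.length + c) (h : ∃ n, ∀ i ≥ n, TorSuccVanishes S M i N) :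
    ∀ i ≥ c, TorSuccVanishes S M i N := by
  obtain ⟨_, _, xs, hxs, hxmem, hspan⟩ := hQ
  let := Module.compHom M (algebraMap Q S)
  let := Module.compHom N (algebraMap Q S)
  have : IsScalarTower Q S M := .of_algebraMap_smul fun _ _ => rfl
  have : IsScalarTower Q S N := .of_algebraMap_smul fun _ _ => rfl
  have : Module.Finite Q S := .of_surjective (Algebra.linearMap Q S) hS
  have : Module.Finite Q M := .trans S M
  obtain ⟨zs, rfl⟩ := List.map_surjective_iff.mpr hS ys
  have hzmem (z : Q) (hz : z ∈ zs) : z ∈ maximalIdeal Q := fun hunit =>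
    hymem _ (List.mem_map_of_mem hz) (hunit.map (algebraMap Q S))
  have hlen : xs.length ≤ c + rs.length + zs.length := by
    have hle : (xs.length : WithBot ℕ∞) ≤ zs.length + c + rs.length :=
      calc (xs.length : WithBot ℕ∞)
        _ ≤ ringKrullDim Q := length_le_ringKrullDim_of_isWeaklyRegular hxs hxmem
        _ ≤ ringKrullDim S + rs.length := ringKrullDim_le_add_length hS hmem hker
        _ ≤ zs.length + c + rs.length := add_le_add_left (by simpa using hdim) _
    have : xs.length ≤ zs.length + c + rs.length := by exact_mod_cast hle
    omega
  exact of_restrictScalars_of_isWeaklyRegular hrs hS hker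
    (of_isWeaklyRegular hxs (hspan.trans (span_nonunits Q))
      ((isWeaklyRegular_map_algebraMap_iff S M zs).mp hys) hzmem hlen) h

theorem of_eventually_of_flat {R S Q : Type u} [CommRing R] [IsLocalRing R] [IsNoetherianRing R]
    [CommRing S] [IsLocalRing S] [Algebra R S] [IsLocalHom (algebraMap R S)] [Module.Flat R S]
    (hmap : maximalIdeal S = (maximalIdeal R).map (algebraMap R S)) [CommRing Q]
    (hQ : IsRegLocal Q) {rs : List Q} (hmem : ∀ r ∈ rs, r ∈ nonunits Q)
    (hrs : IsWeaklyRegular Q rs) (e : (Q ⧸ Ideal.ofList rs) ≃+* S) {M N : Type u}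
    [AddCommGroup M] [Module R M] [Module.Finite R M] [AddCommGroup N] [Module R N]
    {ys : List R} (hymem : ∀ y ∈ ys, y ∈ nonunits R) (hys : IsWeaklyRegular M ys) {c : ℕ}
    (hdim : ringKrullDim R ≤ ys.length + c) (h : ∃ n, ∀ i ≥ n, TorSuccVanishes R M i N) :
    ∀ i ≥ c, TorSuccVanishes R M i N := by
  let := (e.toRingHom.comp (Ideal.Quotient.mk _)).toAlgebra
  have hS : Function.Surjective (algebraMap Q S) :=
    e.surjective.comp Ideal.Quotient.mk_surjective
  have hker : RingHom.ker (algebraMap Q S) = Ideal.ofList rs :=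
    (RingHom.ker_comp_of_injective _ e.injective).trans Ideal.mk_ker
  have : IsNoetherianRing Q := hQ.1
  have : IsNoetherianRing S := isNoetherianRing_of_surjective Q S _ hS
  have : Module.FaithfullyFlat R S := .of_flat_of_isLocalHom
  obtain ⟨n, hn⟩ := h
  intro i hi
  rw [← faithfullyFlat_iff (S := S)]
  refine of_eventually_of_isRegLocal hQ hmem hrs hS hker (ys := ys.map (algebraMap R S)) ?_
    (hys.of_flat_of_isBaseChange (TensorProduct.isBaseChange R M S)) ?_
    ⟨n, fun j hj => (faithfullyFlat_iff j).mpr (hn j hj)⟩ i hi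
  · simpa using hymem
  · rw [List.length_map]
    exact (ringKrullDim_le_of_maximalIdeal_eq_map hmap).trans hdim

theorem of_eventually_of_isCIRing {R : Type u} [CommRing R] (hR : IsCIRing R) {M N : Type u}
    [AddCommGroup M] [Module R M] [Module.Finite R M] [AddCommGroup N] [Module R N]
    {ys : List R} (hymem : ∀ y ∈ ys, y ∈ nonunits R) (hys : IsWeaklyRegular M ys) {c : ℕ}
    (hdim : ringKrullDim R ≤ ys.length + c) (h : ∃ n, ∀ i ≥ n, TorSuccVanishes R M i N) :
    ∀ i ≥ c, TorSuccVanishes R M i N := by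
  obtain ⟨_, _, Q, _, hQ, rs, hmem, hrs, ⟨e⟩⟩ := hR
  rw [span_nonunits R] at e
  have : Module.Flat R (AdicCompletion (maximalIdeal R) R) := AdicCompletion.flat_of_isNoetherian _
  exact of_eventually_of_flat AdicCompletion.maximalIdeal_eq_map hQ hmem hrs e hymem hys hdim h

end TorSuccVanishes

end CompleteIntersection

theorem stmt10_general (R : Type u) [CommRing R] (hR : IsCIRing R)
    (M N : Type u) [AddCommGroup M] [Module R M] [Module.Finite R M]
    [AddCommGroup N] [Module R N] (c : ℕ)
    (hM : ringKrullDim R ≤ ((rdepth R M + c : ℕ∞) : WithBot ℕ∞))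
    (hv : ∃ n0 : ℕ, ∀ i ≥ n0, Subsingleton (TorM R i M N)) :
    ∀ i > c, Subsingleton (TorM R i M N) := by
  have : IsNoetherianRing R := hR.1
  have : IsLocalRing R := hR.2.1
  obtain ⟨ys, hmem, hys, hdim⟩ := exists_isWeaklyRegular_of_ringKrullDim_le_rdepth_add hM
  obtain ⟨n, hn⟩ := hv
  intro i hi
  obtain ⟨j, rfl⟩ := Nat.exists_eq_add_of_lt hi
  rw [subsingleton_torM_succ_iff]
  exact TorSuccVanishes.of_eventually_of_isCIRing hR hmem hys hdim
    ⟨n, fun k hk => (subsingleton_torM_succ_iff k).mp (hn (k + 1) (by omega))⟩ _ (by omega)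

/-- Jorgensen: over a complete intersection, eventual vanishing of Tor
against a maximal Cohen-Macaulay module gives vanishing from degree 1 on. -/
theorem stmt10 (R : Type u) [CommRing R] (hR : IsCIRing R)
    (M N : Type u) [AddCommGroup M] [Module R M] [Module.Finite R M]
    [AddCommGroup N] [Module R N] [Module.Finite R N]
    (hMCM : IsMCM R M)
    (hv : ∃ n0 : ℕ, ∀ i ≥ n0, Subsingleton (TorM R i M N)) :
    ∀ i ≥ 1, Subsingleton (TorM R i M N) :=
  stmt10_general R hR M N 0 (by simpa using hMCM.ge) hv

end
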